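/- arXiv:2101.03728 — 2 statements merged into one kernel-verified Lean document; each statement's English description precedes it below -/
import Mathlib

section
/- Let λ∈{1,−1}, t∈ℝ, τ∈(0,1/2], N a positive integer, and w∈H¹(𝕋), and let R₅ be defined as in the context. Then for every s∈(1/2,1): ‖R₅‖_{H^s} ≤ C τ^{3/2} ‖w‖_{H¹}³, where the constant C depends only on s. -/
/-!
Write `⟨k⟩ = (1 + k²)^{1/2}` and `A_k = ⟨k⟩ |ŵ_k|`, so that `A ∈ ℓ²`. In the integral defining `R₅`,
the first oscillatory factor is at most `2` and the second at most `2 (τ |k₂ k₃|)^{1/2}`, by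
interpolation in `|e^{ix} - 1| ≤ min(2, |x|)`; integrating over `[0, τ]` yields `τ^{3/2}`. Since
`⟨k⟩ ≤ 2 |k|` for `k ≠ 0`, this bounds `⟨k⟩^s |R̂₅(k)|` by `8 τ^{3/2}` times
`∑ A_{-k₁} A_{k₂} A_{k₃} K(k, k₂, k₃)`, with the kernel
`K(k, k₂, k₃) = ⟨k⟩^{s-1} ⟨k₂⟩^{-1/2} ⟨k₃⟩^{-1/2}`.

Cauchy–Schwarz, with `A_{k₂} A_{k₃}` as one factor and `A_{-k₁} K` as the other, reduces the claim
to a bound on `∑ K²` over `k - k₂ - k₃ = k₁` that is uniform in `k₁`. Put `f = ⟨·⟩^{s-2}`, which is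
summable because `s < 1`. For `0 ≤ s`, `K²` is a weighted geometric mean of `f(k) f(k₂)`,
`f(k) f(k₃)` and `f(k₂) f(k₃)`, hence at most their weighted arithmetic mean, and each of these
three products has sum `(∑ f)²` over the plane `k - k₂ - k₃ = k₁`. For `s < 0` the `H^s` norm is at
most the `H⁰` norm.
-/

noncomputable section

open Complex MeasureTheory
open scoped BigOperators

/-- A function on the torus `𝕋 = (-π,π)` is represented by its sequence of Fourier
coefficients `f̂ : ℤ → ℂ`. -/
abbrev FSeq := ℤ → ℂ

/-- Membership in the Sobolev space `H^s(𝕋)`: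
`∑_{k∈ℤ} (1+k²)^s |f̂_k|² < ∞`. -/
def InHs (s : ℝ) (a : FSeq) : Prop :=
  Summable fun k : ℤ => (1 + (k : ℝ) ^ 2) ^ s * ‖a k‖ ^ 2

/-- The `H^s(𝕋)` norm: `‖f‖_{H^s}² = 2π ∑_{k∈ℤ} (1+k²)^s |f̂_k|²`. -/
def hnorm (s : ℝ) (a : FSeq) : ℝ :=
  Real.sqrt (2 * Real.pi * ∑' k : ℤ, (1 + (k : ℝ) ^ 2) ^ s * ‖a k‖ ^ 2)

/-- The defect term `R₅`. -/
def R5 (lam t τ : ℝ) (N : ℕ) (w : FSeq) : FSeq := fun k =>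
  if k ≠ 0 ∧ |k| ≤ (N : ℤ) then
    Complex.I * (lam : ℂ) * ∑' p : ℤ × ℤ,
      (if |k - p.1| ≤ (N : ℤ) then
        (∫ s in (0 : ℝ)..τ, ((p.1 : ℂ) / (k : ℂ)) *
          Complex.exp (Complex.I * (t : ℂ) *
            ((k : ℂ) ^ 2 + (p.1 : ℂ) ^ 2 - (p.2 : ℂ) ^ 2 - ((k - p.1 - p.2 : ℤ) : ℂ) ^ 2)) *
          (Complex.exp (2 * Complex.I * (s : ℂ) * (k : ℂ) * (p.1 : ℂ)) - 1) *
          (Complex.exp (2 * Complex.I * (s : ℂ) * (p.2 : ℂ) * ((k - p.1 - p.2 : ℤ) : ℂ)) - 1)) *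
        (starRingEnd ℂ) (w (-p.1)) * w p.2 * w (k - p.1 - p.2)
      else 0)
  else 0

open scoped NNReal ENNReal

lemma ennreal_tsum_mul_sq_le {ι : Type*} (f g : ι → ℝ≥0∞) :
    (∑' i, f i * g i) ^ 2 ≤ (∑' i, f i ^ 2) * ∑' i, g i ^ 2 := by
  let _ : MeasurableSpace ι := ⊤
  have holder : ∑' i, f i * g i ≤
      (∑' i, f i ^ 2) ^ (1 / 2 : ℝ) * (∑' i, g i ^ 2) ^ (1 / 2 : ℝ) := by
    simpa only [lintegral_count, Pi.mul_apply, ENNReal.rpow_two] using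
      ENNReal.lintegral_mul_le_Lp_mul_Lq Measure.count Real.HolderConjugate.two_two
        (measurable_from_top (f := f)).aemeasurable (measurable_from_top (f := g)).aemeasurable
  have sq_rpow_half (x : ℝ≥0∞) : (x ^ (1 / 2 : ℝ)) ^ 2 = x := by
    rw [← ENNReal.rpow_natCast, ← ENNReal.rpow_mul]
    norm_num
  calc (∑' i, f i * g i) ^ 2
      ≤ ((∑' i, f i ^ 2) ^ (1 / 2 : ℝ) * (∑' i, g i ^ 2) ^ (1 / 2 : ℝ)) ^ 2 := by gcongr
    _ = (∑' i, f i ^ 2) * ∑' i, g i ^ 2 := by rw [mul_pow, sq_rpow_half, sq_rpow_half]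

lemma rpow_add_mul_rpow_add_mul_rpow_add_le {α β γ : ℝ≥0} (h : α + β + γ = 1) (x y z : ℝ≥0) :
    x ^ (α + β : ℝ) * y ^ (α + γ : ℝ) * z ^ (β + γ : ℝ) ≤
      α * (x * y) + β * (x * z) + γ * (y * z) := by
  calc x ^ (α + β : ℝ) * y ^ (α + γ : ℝ) * z ^ (β + γ : ℝ)
      = (x * y) ^ (α : ℝ) * (x * z) ^ (β : ℝ) * (y * z) ^ (γ : ℝ) := by
        simp only [NNReal.mul_rpow, NNReal.rpow_add_of_nonneg _ α.coe_nonneg β.coe_nonneg,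
          NNReal.rpow_add_of_nonneg _ α.coe_nonneg γ.coe_nonneg,
          NNReal.rpow_add_of_nonneg _ β.coe_nonneg γ.coe_nonneg]
        ring
    _ ≤ α * (x * y) + β * (x * z) + γ * (y * z) :=
        NNReal.geom_mean_le_arith_mean3_weighted α β γ _ _ _ h

section Convolution

variable {G : Type*} [AddCommGroup G]

lemma tsum_tsum_mul_sub_sub (f g : G → ℝ≥0∞) (m : G) :
    ∑' x, ∑' y, f y * g (m - x - y) = (∑' x, f x) * ∑' x, g x := by
  have translate (y : G) : ∑' x, g (m - x - y) = ∑' x, g x := by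
    simpa only [Equiv.subLeft_apply, sub_right_comm] using (Equiv.subLeft (m - y)).tsum_eq g
  rw [ENNReal.tsum_comm]
  simp_rw [ENNReal.tsum_mul_left, translate, ENNReal.tsum_mul_right]

lemma tsum_tsum_rpow_add_mul_le {α β γ : ℝ≥0} (h : α + β + γ = 1) (f : G → ℝ≥0) (m : G) :
    ∑' x, ∑' y,
      ((f x ^ (α + β : ℝ) * f y ^ (α + γ : ℝ) * f (x - m - y) ^ (β + γ : ℝ) : ℝ≥0) : ℝ≥0∞) ≤
      (∑' x, (f x : ℝ≥0∞)) ^ 2 := by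
  have translate_left (x : G) : ∑' y, (f (x - m - y) : ℝ≥0∞) = ∑' y, (f y : ℝ≥0∞) :=
    (Equiv.subLeft (x - m)).tsum_eq fun y ↦ (f y : ℝ≥0∞)
  have translate_right (y : G) : ∑' x, (f (x - m - y) : ℝ≥0∞) = ∑' x, (f x : ℝ≥0∞) := by
    simpa only [Equiv.subRight_apply, sub_sub] using
      (Equiv.subRight (m + y)).tsum_eq fun x ↦ (f x : ℝ≥0∞)
  have sum_yz : ∑' x, ∑' y, (f y * f (x - m - y) : ℝ≥0∞) = (∑' x, (f x : ℝ≥0∞)) ^ 2 := by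
    rw [ENNReal.tsum_comm]
    simp_rw [ENNReal.tsum_mul_left, translate_right, ENNReal.tsum_mul_right, sq]
  calc _ ≤ ∑' x, ∑' y, (α * (f x * f y) + β * (f x * f (x - m - y)) +
        γ * (f y * f (x - m - y)) : ℝ≥0∞) := by
        gcongr with x y
        exact_mod_cast rpow_add_mul_rpow_add_mul_rpow_add_le h (f x) (f y) (f (x - m - y))
    _ = (α + β + γ : ℝ≥0∞) * (∑' x, (f x : ℝ≥0∞)) ^ 2 := by
        simp_rw [ENNReal.tsum_add, ENNReal.tsum_mul_left, translate_left, sum_yz,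
          ENNReal.tsum_mul_right]
        ring
    _ = (∑' x, (f x : ℝ≥0∞)) ^ 2 := by
        rw [← ENNReal.coe_add, ← ENNReal.coe_add, h, ENNReal.coe_one, one_mul]

lemma tsum_sq_trilinear_le (u v w : G → ℝ≥0∞) (K : G → G → G → ℝ≥0∞) {B : ℝ≥0∞}
    (hK : ∀ m, ∑' k, ∑' q, K k q (k - m - q) ^ 2 ≤ B) :
    ∑' k, (∑' p : G × G, u p.1 * v p.2 * w (k - p.1 - p.2) * K k p.2 (k - p.1 - p.2)) ^ 2 ≤
      (∑' k, u k ^ 2) * (∑' k, v k ^ 2) * (∑' k, w k ^ 2) * B := by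
  have cauchy_schwarz (k : G) :
      (∑' p : G × G, u p.1 * v p.2 * w (k - p.1 - p.2) * K k p.2 (k - p.1 - p.2)) ^ 2 ≤
        ((∑' k, v k ^ 2) * ∑' k, w k ^ 2) *
          ∑' m, u m ^ 2 * ∑' q, K k q (k - m - q) ^ 2 := by
    have factored := ennreal_tsum_mul_sq_le (fun p : G × G ↦ v p.2 * w (k - p.1 - p.2))
      (fun p ↦ u p.1 * K k p.2 (k - p.1 - p.2))
    simp only [mul_pow, ENNReal.tsum_prod (f := fun m q ↦ v q ^ 2 * w (k - m - q) ^ 2),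
      ENNReal.tsum_prod (f := fun m q ↦ u m ^ 2 * K k q (k - m - q) ^ 2),
      tsum_tsum_mul_sub_sub (fun q ↦ v q ^ 2) (fun q ↦ w q ^ 2), ENNReal.tsum_mul_left] at factored
    convert factored using 4
    ring
  calc _ ≤ ∑' k, ((∑' k, v k ^ 2) * ∑' k, w k ^ 2) *
        ∑' m, u m ^ 2 * ∑' q, K k q (k - m - q) ^ 2 := ENNReal.tsum_le_tsum cauchy_schwarz
    _ = ((∑' k, v k ^ 2) * ∑' k, w k ^ 2) *
        ∑' m, u m ^ 2 * ∑' k, ∑' q, K k q (k - m - q) ^ 2 := by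
      rw [ENNReal.tsum_mul_left, ENNReal.tsum_comm]
      simp_rw [ENNReal.tsum_mul_left]
    _ ≤ ((∑' k, v k ^ 2) * ∑' k, w k ^ 2) * ∑' m, u m ^ 2 * B := by
      gcongr with m
      exact hK m
    _ = (∑' k, u k ^ 2) * (∑' k, v k ^ 2) * (∑' k, w k ^ 2) * B := by
      rw [ENNReal.tsum_mul_right]
      ring

end Convolution

/-- The Japanese bracket `⟨k⟩ = (1 + k²)^{1/2}`, valued in `ℝ≥0` so that sums of its powers can be
taken in `ℝ≥0∞`. -/
def bracket (k : ℤ) : ℝ≥0 := NNReal.sqrt (1 + ‖k‖₊ ^ 2)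

lemma bracket_sq (k : ℤ) : bracket k ^ 2 = 1 + ‖k‖₊ ^ 2 := NNReal.sq_sqrt _

lemma one_le_bracket (k : ℤ) : 1 ≤ bracket k := by
  simp [bracket]

lemma bracket_ne_zero (k : ℤ) : bracket k ≠ 0 := (one_pos.trans_le (one_le_bracket k)).ne'

lemma bracket_neg (k : ℤ) : bracket (-k) = bracket k := by simp only [bracket, nnnorm_neg]

lemma nnnorm_le_bracket (k : ℤ) : ‖k‖₊ ≤ bracket k :=
  NNReal.le_sqrt_iff_sq_le.mpr le_add_self

lemma bracket_le_two_mul_nnnorm {k : ℤ} (hk : k ≠ 0) : bracket k ≤ 2 * ‖k‖₊ := by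
  have one_le : 1 ≤ ‖k‖₊ := by
    rw [← NNReal.natCast_natAbs]
    exact_mod_cast Int.natAbs_pos.mpr hk
  rw [bracket, NNReal.sqrt_le_iff_le_sq]
  nlinarith [one_le_pow₀ one_le (n := 2)]

lemma coe_bracket_rpow_sq (k : ℤ) (s : ℝ) :
    (((bracket k ^ s) ^ 2 : ℝ≥0) : ℝ) = (1 + (k : ℝ) ^ 2) ^ s := by
  rw [← NNReal.rpow_natCast, ← NNReal.rpow_mul, mul_comm, NNReal.rpow_mul, NNReal.rpow_natCast,
    bracket_sq]
  simp [Int.norm_eq_abs]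

lemma summable_bracket_rpow {r : ℝ} (hr : r < -1) : Summable fun k ↦ bracket k ^ r := by
  rw [← NNReal.summable_coe]
  have ne_zero : ∀ᶠ k : ℤ in Filter.cofinite, k ≠ 0 := (Set.finite_singleton 0).compl_mem_cofinite
  refine (Real.summable_abs_int_rpow (lt_neg_of_lt_neg hr)).of_norm_bounded_eventually ?_
  filter_upwards [ne_zero] with k hk
  rw [neg_neg, Real.norm_of_nonneg (NNReal.coe_nonneg _), NNReal.coe_rpow, ← Int.norm_eq_abs]
  exact Real.rpow_le_rpow_of_nonpos (norm_pos_iff.mpr hk) (nnnorm_le_bracket k) (by linarith)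

/-- The weight `⟨k⟩^{s-1} ⟨q⟩^{-1/2} ⟨r⟩^{-1/2}` left on the output frequency `k` and the input
frequencies `q`, `r` once each of the three factors `w` has been given its `H¹` weight. -/
def kernel (s : ℝ) (k q r : ℤ) : ℝ≥0 :=
  bracket k ^ (s - 1) * bracket q ^ (-1 / 2 : ℝ) * bracket r ^ (-1 / 2 : ℝ)

lemma tsum_tsum_kernel_sq_le {s : ℝ} (hs₀ : 0 ≤ s) (hs₁ : s ≤ 1) (m : ℤ) :
    ∑' k, ∑' q, (kernel s k q (k - m - q) : ℝ≥0∞) ^ 2 ≤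
      (∑' k, ((bracket k ^ (s - 2) : ℝ≥0) : ℝ≥0∞)) ^ 2 := by
  have two_sub_pos : 0 < 2 - s := by linarith
  lift (1 - s) / (2 - s) to ℝ≥0 using div_nonneg (by linarith) two_sub_pos.le with α hα
  lift s / (2 - s) to ℝ≥0 using div_nonneg hs₀ two_sub_pos.le with γ hγ
  have weights_sum : α + α + γ = 1 := by
    rw [← NNReal.coe_inj]
    push_cast
    rw [hα, hγ]
    field_simp
    ring
  have exponent_x : (s - 2) * (α + α) = (s - 1) * 2 := by
    rw [hα]
    field_simp
    ring
  have exponent_y : (s - 2) * (α + γ) = -1 / 2 * 2 := by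
    rw [hα, hγ]
    field_simp
    ring
  convert tsum_tsum_rpow_add_mul_le weights_sum (fun k ↦ bracket k ^ (s - 2)) m using 5 with k q
  simp only [← NNReal.rpow_mul, exponent_x, exponent_y, kernel, ← ENNReal.coe_pow, mul_pow,
    ← NNReal.rpow_natCast, Nat.cast_ofNat]

/-- The `k`-th coefficient of `a`, in absolute value and with its `H^s` weight: `⟨k⟩^s |a_k|`. -/
def weightedCoeff (s : ℝ) (a : FSeq) (k : ℤ) : ℝ≥0 := bracket k ^ s * ‖a k‖₊

/-- The sum `∑ ⟨k⟩^{2s} |a_k|²`, which is infinite if `a` is not in `H^s`; unlike `hnorm`, it omits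
the factor `2π` and the square root. -/
def energy (s : ℝ) (a : FSeq) : ℝ≥0∞ := ∑' k, (weightedCoeff s a k : ℝ≥0∞) ^ 2

lemma coe_weightedCoeff_sq (s : ℝ) (a : FSeq) (k : ℤ) :
    ((weightedCoeff s a k ^ 2 : ℝ≥0) : ℝ) = (1 + (k : ℝ) ^ 2) ^ s * ‖a k‖ ^ 2 := by
  rw [weightedCoeff, mul_pow, NNReal.coe_mul, coe_bracket_rpow_sq, NNReal.coe_pow, coe_nnnorm]

lemma energy_ne_top_iff {s : ℝ} {a : FSeq} : energy s a ≠ ∞ ↔ InHs s a := by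
  simp only [energy, InHs, ← ENNReal.coe_pow, ENNReal.tsum_coe_ne_top_iff_summable,
    ← coe_weightedCoeff_sq, NNReal.summable_coe]

lemma hnorm_sq (s : ℝ) (a : FSeq) : hnorm s a ^ 2 = 2 * Real.pi * (energy s a).toReal := by
  have toReal_energy :
      (energy s a).toReal = ∑' k : ℤ, (1 + (k : ℝ) ^ 2) ^ s * ‖a k‖ ^ 2 := by
    simp only [energy, ← ENNReal.coe_pow, ENNReal.tsum_toReal_eq fun _ ↦ ENNReal.coe_ne_top,
      ENNReal.coe_toReal, coe_weightedCoeff_sq]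
  rw [hnorm, ← toReal_energy, Real.sq_sqrt (by positivity)]

lemma energy_mono {s s' : ℝ} (h : s ≤ s') (a : FSeq) : energy s a ≤ energy s' a := by
  unfold energy weightedCoeff
  gcongr with k
  exact one_le_bracket k

lemma norm_exp_I_mul_sub_one_le_rpow {θ : ℝ} (hθ₀ : 0 ≤ θ) (hθ₁ : θ ≤ 1) (x : ℝ) :
    ‖exp (I * x) - 1‖ ≤ 2 ^ (1 - θ) * |x| ^ θ := by
  have le_two : ‖exp (I * x) - 1‖ ≤ 2 := by
    rw [norm_exp_I_mul_ofReal_sub_one, norm_mul, Real.norm_ofNat, Real.norm_eq_abs]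
    linarith [Real.abs_sin_le_one (x / 2)]
  calc ‖exp (I * x) - 1‖
      = ‖exp (I * x) - 1‖ ^ (1 - θ) * ‖exp (I * x) - 1‖ ^ θ := by
        rw [← Real.rpow_add_of_nonneg (norm_nonneg _) (sub_nonneg.mpr hθ₁) hθ₀, sub_add_cancel,
          Real.rpow_one]
    _ ≤ 2 ^ (1 - θ) * |x| ^ θ := by
        gcongr
        exact Real.norm_exp_I_mul_ofReal_sub_one_le

lemma norm_integral_exp_sub_one_mul_exp_sub_one_le {θ : ℝ} (hθ₀ : 0 ≤ θ) (hθ₁ : θ ≤ 1)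
    (z : ℂ) (a b τ : ℝ) :
    ‖∫ s in (0 : ℝ)..τ, z * (exp (I * (s * a : ℝ)) - 1) * (exp (I * (s * b : ℝ)) - 1)‖ ≤
      2 ^ (2 - θ) * ‖z‖ * |b| ^ θ * |τ| ^ (1 + θ) := by
  have integrand_le (s : ℝ) (hs : s ∈ Set.uIoc 0 τ) :
      ‖z * (exp (I * (s * a : ℝ)) - 1) * (exp (I * (s * b : ℝ)) - 1)‖ ≤
        ‖z‖ * 2 * (2 ^ (1 - θ) * (|τ| * |b|) ^ θ) := by
    have abs_le : |s| ≤ |τ| := by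
      simpa using Set.abs_sub_left_of_mem_uIcc (Set.uIoc_subset_uIcc hs)
    rw [norm_mul, norm_mul]
    gcongr
    · simpa using norm_exp_I_mul_sub_one_le_rpow le_rfl zero_le_one (s * a)
    · refine (norm_exp_I_mul_sub_one_le_rpow hθ₀ hθ₁ (s * b)).trans ?_
      rw [abs_mul]
      gcongr
  refine (intervalIntegral.norm_integral_le_of_norm_le_const integrand_le).trans_eq ?_
  rw [sub_zero, Real.mul_rpow (abs_nonneg τ) (abs_nonneg b),
    Real.rpow_add_of_nonneg (abs_nonneg τ) zero_le_one hθ₀, Real.rpow_one,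
    show 2 - θ = 1 + (1 - θ) by ring, Real.rpow_add two_pos, Real.rpow_one]
  ring

/-- The coefficient of `conj(w_{-p}) w_q w_r` in the `k`-th Fourier coefficient of `R₅`. -/
def interactionCoeff (t τ : ℝ) (k p q r : ℤ) : ℂ :=
  ∫ s in (0 : ℝ)..τ, ((p : ℂ) / (k : ℂ)) *
    exp (I * (t : ℂ) * ((k : ℂ) ^ 2 + (p : ℂ) ^ 2 - (q : ℂ) ^ 2 - (r : ℂ) ^ 2)) *
    (exp (2 * I * (s : ℂ) * (k : ℂ) * (p : ℂ)) - 1) *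
    (exp (2 * I * (s : ℂ) * (q : ℂ) * (r : ℂ)) - 1)

lemma nnnorm_interactionCoeff_le (t τ : ℝ) (k p q r : ℤ) :
    ‖interactionCoeff t τ k p q r‖₊ ≤
      4 * ‖τ‖₊ ^ (3 / 2 : ℝ) * (‖p‖₊ / ‖k‖₊) * (‖q‖₊ * ‖r‖₊) ^ (1 / 2 : ℝ) := by
  let phase : ℝ := t * ((k : ℝ) ^ 2 + (p : ℝ) ^ 2 - (q : ℝ) ^ 2 - (r : ℝ) ^ 2)
  have norm_amplitude : ‖(p : ℂ) / k * exp (phase * I)‖ = ‖p‖ / ‖k‖ := by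
    rw [norm_mul, norm_exp_ofReal_mul_I, mul_one, norm_div, norm_intCast, norm_intCast,
      Int.norm_eq_abs, Int.norm_eq_abs]
  have eq_integral : interactionCoeff t τ k p q r =
      ∫ s in (0 : ℝ)..τ, (p : ℂ) / k * exp (phase * I) *
        (exp (I * (s * (2 * k * p) : ℝ)) - 1) * (exp (I * (s * (2 * q * r) : ℝ)) - 1) := by
    have phase_eq :
        I * t * ((k : ℂ) ^ 2 + (p : ℂ) ^ 2 - (q : ℂ) ^ 2 - (r : ℂ) ^ 2) = phase * I := by
      push_cast [phase]
      ring
    have exponent_eq (s : ℝ) (a b : ℤ) : 2 * I * s * a * b = I * (s * (2 * a * b) : ℝ) := by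
      push_cast
      ring
    simp only [interactionCoeff, phase_eq, exponent_eq]
  have four_eq : (2 : ℝ) ^ (2 - 1 / 2 : ℝ) * 2 ^ (1 / 2 : ℝ) = 4 := by
    rw [← Real.rpow_add two_pos]
    norm_num
  have integral_le := norm_integral_exp_sub_one_mul_exp_sub_one_le (θ := 1 / 2) (by norm_num)
    (by norm_num) ((p : ℂ) / k * exp (phase * I)) (2 * k * p) (2 * q * r) τ
  rw [← eq_integral, norm_amplitude] at integral_le
  rw [← NNReal.coe_le_coe]
  push_cast
  refine integral_le.trans_eq ?_
  rw [mul_assoc 2, abs_mul, Real.mul_rpow (abs_nonneg _) (abs_nonneg _), abs_two, ← four_eq,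
    abs_mul, ← Int.norm_eq_abs, ← Int.norm_eq_abs, Real.norm_eq_abs,
    show (1 + 1 / 2 : ℝ) = 3 / 2 by norm_num]
  ring

lemma bracket_rpow_mul_nnnorm_interactionCoeff_le (s t τ : ℝ) {k : ℤ} (hk : k ≠ 0) (p q r : ℤ) :
    bracket k ^ s * ‖interactionCoeff t τ k p q r‖₊ ≤
      8 * ‖τ‖₊ ^ (3 / 2 : ℝ) * (bracket p * bracket q * bracket r * kernel s k q r) := by
  have inv_nnnorm_le : ‖k‖₊⁻¹ ≤ 2 * (bracket k)⁻¹ := by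
    rw [← div_eq_mul_inv, le_div_iff₀ (bracket_ne_zero k).bot_lt, inv_mul_le_iff₀
      (nnnorm_pos.mpr hk), mul_comm]
    exact bracket_le_two_mul_nnnorm hk
  have rpow_half (j : ℤ) : bracket j ^ (1 / 2 : ℝ) = bracket j * bracket j ^ (-1 / 2 : ℝ) := by
    rw [← NNReal.rpow_one_add'] <;> norm_num
  calc bracket k ^ s * ‖interactionCoeff t τ k p q r‖₊
      ≤ bracket k ^ s *
        (4 * ‖τ‖₊ ^ (3 / 2 : ℝ) * (‖p‖₊ * ‖k‖₊⁻¹) * (‖q‖₊ * ‖r‖₊) ^ (1 / 2 : ℝ)) := by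
        rw [← div_eq_mul_inv]
        gcongr
        exact nnnorm_interactionCoeff_le t τ k p q r
    _ ≤ bracket k ^ s * (4 * ‖τ‖₊ ^ (3 / 2 : ℝ) * (bracket p * (2 * (bracket k)⁻¹)) *
        (bracket q * bracket r) ^ (1 / 2 : ℝ)) := by
        gcongr <;> apply nnnorm_le_bracket
    _ = 8 * ‖τ‖₊ ^ (3 / 2 : ℝ) * (bracket p * bracket q * bracket r * kernel s k q r) := by
        rw [kernel, NNReal.rpow_sub_one (bracket_ne_zero k), NNReal.mul_rpow, rpow_half,
          rpow_half]
        ring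

lemma bracket_rpow_mul_nnnorm_interaction_le (s t τ : ℝ) (w : FSeq) {k : ℤ} (hk : k ≠ 0)
    (p q r : ℤ) :
    bracket k ^ s *
        ‖interactionCoeff t τ k p q r * (starRingEnd ℂ) (w (-p)) * w q * w r‖₊ ≤
      8 * ‖τ‖₊ ^ (3 / 2 : ℝ) *
        (weightedCoeff 1 w (-p) * weightedCoeff 1 w q * weightedCoeff 1 w r * kernel s k q r) := by
  simp only [nnnorm_mul, RCLike.nnnorm_conj, weightedCoeff, bracket_neg, NNReal.rpow_one]
  calc bracket k ^ s * (‖interactionCoeff t τ k p q r‖₊ * ‖w (-p)‖₊ * ‖w q‖₊ * ‖w r‖₊)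
      = bracket k ^ s * ‖interactionCoeff t τ k p q r‖₊ * (‖w (-p)‖₊ * ‖w q‖₊ * ‖w r‖₊) := by ring
    _ ≤ 8 * ‖τ‖₊ ^ (3 / 2 : ℝ) * (bracket p * bracket q * bracket r * kernel s k q r) *
          (‖w (-p)‖₊ * ‖w q‖₊ * ‖w r‖₊) := by
        grw [bracket_rpow_mul_nnnorm_interactionCoeff_le s t τ hk p q r]
    _ = 8 * ‖τ‖₊ ^ (3 / 2 : ℝ) * (bracket p * ‖w (-p)‖₊ * (bracket q * ‖w q‖₊) *
          (bracket r * ‖w r‖₊) * kernel s k q r) := by ring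

lemma weightedCoeff_R5_le (s lam t τ : ℝ) (N : ℕ) (w : FSeq) (k : ℤ) :
    (weightedCoeff s (R5 lam t τ N w) k : ℝ≥0∞) ≤
      ((8 * ‖lam‖₊ * ‖τ‖₊ ^ (3 / 2 : ℝ) : ℝ≥0) : ℝ≥0∞) *
        ∑' p : ℤ × ℤ, (weightedCoeff 1 w (-p.1) : ℝ≥0∞) * weightedCoeff 1 w p.2 *
          weightedCoeff 1 w (k - p.1 - p.2) * kernel s k p.2 (k - p.1 - p.2) := by
  by_cases hk : k ≠ 0 ∧ |k| ≤ (N : ℤ)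
  swap
  · simp [weightedCoeff, R5, hk]
  calc (weightedCoeff s (R5 lam t τ N w) k : ℝ≥0∞)
      ≤ ((bracket k ^ s : ℝ≥0) : ℝ≥0∞) * (‖lam‖ₑ * ∑' p : ℤ × ℤ,
          ‖if |k - p.1| ≤ (N : ℤ) then interactionCoeff t τ k p.1 p.2 (k - p.1 - p.2) *
            (starRingEnd ℂ) (w (-p.1)) * w p.2 * w (k - p.1 - p.2) else 0‖ₑ) := by
        rw [weightedCoeff, R5, if_pos hk, ENNReal.coe_mul, ← enorm_eq_nnnorm, enorm_mul, enorm_mul,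
          enorm_eq_nnnorm I, nnnorm_I, ENNReal.coe_one, one_mul, enorm_eq_nnnorm (lam : ℂ),
          nnnorm_real, ← enorm_eq_nnnorm]
        gcongr
        exact enorm_tsum_le_tsum_enorm
    _ ≤ ‖lam‖ₑ * ∑' p : ℤ × ℤ, ((8 * ‖τ‖₊ ^ (3 / 2 : ℝ) : ℝ≥0) : ℝ≥0∞) *
          (weightedCoeff 1 w (-p.1) * weightedCoeff 1 w p.2 * weightedCoeff 1 w (k - p.1 - p.2) *
            kernel s k p.2 (k - p.1 - p.2)) := by
        rw [mul_left_comm, ← ENNReal.tsum_mul_left]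
        gcongr ‖lam‖ₑ * ?_
        refine ENNReal.tsum_le_tsum fun p ↦ ?_
        split_ifs
        · rw [enorm_eq_nnnorm]
          exact_mod_cast bracket_rpow_mul_nnnorm_interaction_le s t τ w hk.1 p.1 p.2 (k - p.1 - p.2)
        · simp
    _ = ((8 * ‖lam‖₊ * ‖τ‖₊ ^ (3 / 2 : ℝ) : ℝ≥0) : ℝ≥0∞) *
          ∑' p : ℤ × ℤ, (weightedCoeff 1 w (-p.1) : ℝ≥0∞) * weightedCoeff 1 w p.2 *
            weightedCoeff 1 w (k - p.1 - p.2) * kernel s k p.2 (k - p.1 - p.2) := by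
        rw [ENNReal.tsum_mul_left, enorm_eq_nnnorm]
        push_cast
        ring

lemma energy_R5_le {s : ℝ} (hs₀ : 0 ≤ s) (hs₁ : s ≤ 1) (lam t τ : ℝ) (N : ℕ) (w : FSeq) :
    energy s (R5 lam t τ N w) ≤
      ((8 * ‖lam‖₊ * ‖τ‖₊ ^ (3 / 2 : ℝ) : ℝ≥0) : ℝ≥0∞) ^ 2 *
        (energy 1 w ^ 3 * (∑' k, ((bracket k ^ (s - 2) : ℝ≥0) : ℝ≥0∞)) ^ 2) := by
  have energy_reflect : ∑' k, (weightedCoeff 1 w (-k) : ℝ≥0∞) ^ 2 = energy 1 w :=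
    (Equiv.neg ℤ).tsum_eq fun k ↦ (weightedCoeff 1 w k : ℝ≥0∞) ^ 2
  have trilinear := tsum_sq_trilinear_le (fun k ↦ (weightedCoeff 1 w (-k) : ℝ≥0∞))
    (fun k ↦ weightedCoeff 1 w k) (fun k ↦ weightedCoeff 1 w k) (fun k q r ↦ kernel s k q r)
    (tsum_tsum_kernel_sq_le hs₀ hs₁)
  rw [energy_reflect] at trilinear
  calc energy s (R5 lam t τ N w) ≤ _ :=
        ENNReal.tsum_le_tsum fun k ↦ pow_le_pow_left' (weightedCoeff_R5_le s lam t τ N w k) 2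
    _ ≤ ((8 * ‖lam‖₊ * ‖τ‖₊ ^ (3 / 2 : ℝ) : ℝ≥0) : ℝ≥0∞) ^ 2 *
        (energy 1 w * energy 1 w * energy 1 w *
          (∑' k, ((bracket k ^ (s - 2) : ℝ≥0) : ℝ≥0∞)) ^ 2) := by
        simp_rw [mul_pow _ (tsum _), ENNReal.tsum_mul_left]
        gcongr
        exact trilinear
    _ = _ := by ring

lemma hnorm_le_mul_hnorm_pow_of_energy_le {s s' : ℝ} {a b : FSeq} {c : ℝ≥0} {n : ℕ} (hn : n ≠ 0)
    (hb : InHs s' b) (h : energy s a ≤ c ^ 2 * energy s' b ^ n) :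
    hnorm s a ≤ c * hnorm s' b ^ n := by
  have toReal_le : (energy s a).toReal ≤ c ^ 2 * (energy s' b).toReal ^ n := by
    simpa using ENNReal.toReal_mono (by finiteness [energy_ne_top_iff.mpr hb]) h
  have two_pi_le : 2 * Real.pi ≤ (2 * Real.pi) ^ n :=
    le_self_pow₀ (by linarith [Real.pi_gt_three]) hn
  have hnorm_nonneg : 0 ≤ hnorm s' b := Real.sqrt_nonneg _
  refine le_of_sq_le_sq ?_ (by positivity)
  calc hnorm s a ^ 2 = 2 * Real.pi * (energy s a).toReal := hnorm_sq s a
    _ ≤ (2 * Real.pi) ^ n * (c ^ 2 * (energy s' b).toReal ^ n) := by gcongr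
    _ = c ^ 2 * (2 * Real.pi * (energy s' b).toReal) ^ n := by ring
    _ = (c * hnorm s' b ^ n) ^ 2 := by rw [← hnorm_sq]; ring

theorem R5_Hs_bound_general {s : ℝ} (hs : s < 1) :
    ∃ C : ℝ, 0 < C ∧ ∀ (lam t τ : ℝ) (N : ℕ) (w : FSeq), InHs 1 w →
      hnorm s (R5 lam t τ N w) ≤ C * |lam| * |τ| ^ (3 / 2 : ℝ) * hnorm 1 w ^ 3 := by
  obtain ⟨σ, hsσ, hσ₀, hσ₁⟩ : ∃ σ, s ≤ σ ∧ 0 ≤ σ ∧ σ < 1 :=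
    ⟨max s 0, le_max_left s 0, le_max_right s 0, max_lt hs one_pos⟩
  have summable_weight : Summable fun k ↦ bracket k ^ (σ - 2) :=
    summable_bracket_rpow (by linarith)
  obtain ⟨S, hS⟩ := summable_weight
  have S_pos : 0 < S := (NNReal.rpow_pos (bracket_ne_zero 0).bot_lt).trans_le (le_hasSum' hS 0)
  refine ⟨8 * S, by positivity, fun lam t τ N w hw ↦ ?_⟩
  have energy_le : energy s (R5 lam t τ N w) ≤
      ((8 * S * ‖lam‖₊ * ‖τ‖₊ ^ (3 / 2 : ℝ) : ℝ≥0) : ℝ≥0∞) ^ 2 * energy 1 w ^ 3 := by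
    refine (energy_mono hsσ _).trans ((energy_R5_le hσ₀ hσ₁.le lam t τ N w).trans_eq ?_)
    rw [(ENNReal.hasSum_coe.mpr hS).tsum_eq]
    push_cast
    ring
  simpa [mul_assoc] using hnorm_le_mul_hnorm_pow_of_energy_le three_ne_zero hw energy_le

theorem R5_Hs_bound (s : ℝ) (hs : s ∈ Set.Ioo (1 / 2 : ℝ) 1) :
    ∃ C : ℝ, 0 < C ∧ ∀ lam : ℝ, (lam = 1 ∨ lam = -1) → ∀ t τ : ℝ, 0 < τ → τ ≤ 1 / 2 →
      ∀ N : ℕ, 0 < N → ∀ w : FSeq, InHs 1 w →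
      hnorm s (R5 lam t τ N w) ≤ C * τ ^ ((3 : ℝ) / 2) * hnorm 1 w ^ 3 := by
  obtain ⟨C, C_pos, hC⟩ := R5_Hs_bound_general hs.2
  refine ⟨C, C_pos, fun lam hlam t τ hτ _ N _ w hw ↦ ?_⟩
  have abs_lam : |lam| = 1 := by rcases hlam with rfl | rfl <;> simp
  simpa only [abs_lam, mul_one, abs_of_pos hτ] using hC lam t τ N w hw

end
end

section
/- For all v∈H¹(𝕋) and f∈L²(𝕋): ∑_{k∈ℤ} ( ∑_{k₁+k₂+k₃=k} |k₁| |v̂_{k₁}| |v̂_{k₂}| |v̂_{k₃}| ) |f̂_k| ≤ C‖f‖_{L²}‖v‖_{H¹}³, where the inner sum is over all triples of integers (k₁,k₂,k₃) with k₁+k₂+k₃=k and C is an absolute constant. -/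
/-!
For fixed `m, n` the sum over `k` of `|k - m - n| |v̂_{k-m-n}| |f̂_k|` is at most
`‖k v̂‖_{ℓ²} ‖f̂‖_{ℓ²}` by Cauchy–Schwarz and translation invariance. Summing this against
`|v̂_m| |v̂_n|` costs `‖v̂‖_{ℓ¹}²`, and `‖v̂‖_{ℓ¹} ≲ ‖v‖_{H¹}` by Cauchy–Schwarz against
`(1 + k²)^{-1/2} ∈ ℓ²`; any `H^s` with `s > 1/2` would do for these two factors.
The estimates are made in `[0, ∞]`, where sums may be rearranged freely, so the convergence of the
real series is a consequence of the bound.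
-/

noncomputable section

open Complex MeasureTheory
open scoped BigOperators

open Measure
open scoped ENNReal

section Sequences

variable {ι E F : Type*} [NormedAddCommGroup E] [NormedAddCommGroup F]

lemma summable_and_tsum_le_of_tsum_enorm_le {g : ι → ℝ} (hg : ∀ i, 0 ≤ g i) {M : ℝ} (hM : 0 ≤ M)
    (h : ∑' i, ‖g i‖ₑ ≤ ENNReal.ofReal M) : Summable g ∧ ∑' i, g i ≤ M := by
  have hsum : Summable g :=
    (tsum_enorm_ne_top_iff_summable_norm.mp (ne_top_of_le_ne_top ENNReal.ofReal_ne_top h)).of_norm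
  refine ⟨hsum, (ENNReal.ofReal_le_ofReal_iff hM).mp ?_⟩
  simpa only [ENNReal.ofReal_tsum_of_nonneg hg hsum, Real.enorm_of_nonneg (hg _)] using h

variable [MeasurableSpace ι] [DiscreteMeasurableSpace ι]

lemma eLpNorm_two_count_eq_ofReal {a : ι → E} (ha : Summable fun i => ‖a i‖ ^ 2) :
    eLpNorm a 2 count = ENNReal.ofReal √(∑' i, ‖a i‖ ^ 2) := by
  rw [eLpNorm_eq_lintegral_rpow_enorm_toReal two_ne_zero ENNReal.ofNat_ne_top, lintegral_count,
    Real.sqrt_eq_rpow, ← ENNReal.ofReal_rpow_of_nonneg (by positivity) (by positivity),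
    ENNReal.ofReal_tsum_of_nonneg (fun _ => by positivity) ha]
  simp [ENNReal.ofReal_pow]

lemma tsum_enorm_mul_enorm_le_eLpNorm_mul_eLpNorm (p q : ℝ≥0∞) [p.HolderConjugate q]
    (a : ι → E) (b : ι → F) :
    ∑' i, ‖a i‖ₑ * ‖b i‖ₑ ≤ eLpNorm a p count * eLpNorm b q count := by
  have h := eLpNorm_smul_le_mul_eLpNorm (μ := count) (p := p) (q := q) (r := 1)
    (φ := fun i => ‖a i‖) (f := fun i => ‖b i‖)
    Measurable.of_discrete.aestronglyMeasurable Measurable.of_discrete.aestronglyMeasurable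
  simpa [eLpNorm_one_eq_lintegral_enorm, lintegral_count, eLpNorm_norm] using h

end Sequences

section Convolution

variable {G E F : Type*} [AddCommGroup G] [NormedAddCommGroup E] [NormedAddCommGroup F]

lemma tsum_trilinear_pairing_eq (a b c d : G → ℝ≥0∞) :
    ∑' q : G × G × G, a q.2.1 * b q.2.2 * c (q.1 - q.2.1 - q.2.2) * d q.1 =
      ∑' m, ∑' n, b m * c n * ∑' k, a (k - (m + n)) * d k := by
  let e : G × G × G ≃ G × G × G :=
    { toFun := fun x => (x.2.2, x.2.2 - (x.1 + x.2.1), x.1)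
      invFun := fun q => (q.2.2, q.1 - q.2.1 - q.2.2, q.1)
      left_inv := fun x => by ext <;> simp
      right_inv := fun q => by ext <;> simp }
  have he (x : G × G × G) : x.2.2 - (x.2.2 - (x.1 + x.2.1)) - x.1 = x.2.1 := by abel
  rw [← e.tsum_eq]
  simp only [e, Equiv.coe_fn_mk, he, ENNReal.tsum_prod', ← ENNReal.tsum_mul_left]
  refine tsum_congr fun m => tsum_congr fun n => tsum_congr fun k => ?_
  ring

variable [MeasurableSpace G] [DiscreteMeasurableSpace G]

lemma eLpNorm_count_comp_sub_right (p : ℝ≥0∞) (a : G → E) (g : G) :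
    eLpNorm (fun k => a (k - g)) p count = eLpNorm a p count := by
  rw [← eLpNorm_norm, ← eLpNorm_norm a]
  exact eLpNorm_comp_measurePreserving (g := fun k => ‖a k‖)
    Measurable.of_discrete.aestronglyMeasurable (measurePreserving_sub_right count g)

lemma tsum_trilinear_pairing_le (p q : ℝ≥0∞) [p.HolderConjugate q]
    (a : G → E) (b c : G → ℝ≥0∞) (d : G → F) :
    ∑' x : G × G × G, ‖a x.2.1‖ₑ * b x.2.2 * c (x.1 - x.2.1 - x.2.2) * ‖d x.1‖ₑ ≤
      (∑' m, b m) * (∑' n, c n) * (eLpNorm a p count * eLpNorm d q count) := by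
  calc
    _ = ∑' m, ∑' n, b m * c n * ∑' k, ‖a (k - (m + n))‖ₑ * ‖d k‖ₑ :=
      tsum_trilinear_pairing_eq (fun k => ‖a k‖ₑ) b c (fun k => ‖d k‖ₑ)
    _ ≤ ∑' m, ∑' n, b m * c n * (eLpNorm a p count * eLpNorm d q count) := by
      gcongr with m n
      rw [← eLpNorm_count_comp_sub_right p a (m + n)]
      exact tsum_enorm_mul_enorm_le_eLpNorm_mul_eLpNorm p q _ d
    _ = _ := by simp only [ENNReal.tsum_mul_right, ENNReal.tsum_mul_left]

end Convolution

/-- The symbol `⟨k⟩^s = (1 + k²)^{s/2}` of the Bessel potential of order `s`, so that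
`‖f‖_{H^s} = √(2π) ‖⟨k⟩^s f̂‖_{ℓ²}`. -/
def besselSymbol (s : ℝ) (k : ℤ) : ℝ := (1 + (k : ℝ) ^ 2) ^ (s / 2)

lemma besselSymbol_pos (s : ℝ) (k : ℤ) : 0 < besselSymbol s k := by
  unfold besselSymbol
  positivity

lemma besselSymbol_sq (s : ℝ) (k : ℤ) : besselSymbol s k ^ 2 = (1 + (k : ℝ) ^ 2) ^ s := by
  rw [besselSymbol, ← Real.rpow_mul_natCast (by positivity)]
  congr 1
  push_cast
  ring

lemma besselSymbol_neg (s : ℝ) (k : ℤ) : besselSymbol (-s) k = (besselSymbol s k)⁻¹ := by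
  rw [besselSymbol, neg_div, Real.rpow_neg (by positivity), besselSymbol]

lemma abs_le_besselSymbol_one (k : ℤ) : |(k : ℝ)| ≤ besselSymbol 1 k := by
  refine abs_le_of_sq_le_sq ?_ (besselSymbol_pos 1 k).le
  rw [besselSymbol_sq, Real.rpow_one]
  linarith

lemma summable_besselSymbol_neg_sq {s : ℝ} (hs : 1 / 2 < s) :
    Summable fun k : ℤ => besselSymbol (-s) k ^ 2 := by
  refine .of_norm_bounded_eventually
    (Real.summable_abs_int_rpow (b := 2 * s) (by linarith)) ?_
  filter_upwards [(Set.finite_singleton (0 : ℤ)).eventually_cofinite_notMem] with k hk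
  have hk0 : (k : ℝ) ≠ 0 := Int.cast_ne_zero.mpr hk
  rw [Real.norm_of_nonneg (by positivity), besselSymbol_sq, ← mul_neg, Real.rpow_mul (abs_nonneg _),
    Real.rpow_two, sq_abs]
  exact Real.rpow_le_rpow_of_nonpos (by positivity) (by linarith) (by linarith)

lemma hnorm_nonneg (s : ℝ) (a : FSeq) : 0 ≤ hnorm s a := Real.sqrt_nonneg _

lemma eLpNorm_two_le_hnorm {E : Type*} [NormedAddCommGroup E] {s : ℝ} {a : FSeq} (ha : InHs s a)
    {b : ℤ → E} (hb : ∀ k, ‖b k‖ ≤ besselSymbol s k * ‖a k‖) :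
    eLpNorm b 2 count ≤ ENNReal.ofReal (hnorm s a) := by
  have hsq (k : ℤ) : ‖b k‖ ^ 2 ≤ (1 + (k : ℝ) ^ 2) ^ s * ‖a k‖ ^ 2 := by
    rw [← besselSymbol_sq, ← mul_pow]
    gcongr
    exact hb k
  have hsum : Summable fun k => ‖b k‖ ^ 2 := ha.of_nonneg_of_le (fun _ => by positivity) hsq
  rw [eLpNorm_two_count_eq_ofReal hsum, hnorm]
  gcongr
  calc
    ∑' k, ‖b k‖ ^ 2 ≤ ∑' k : ℤ, (1 + (k : ℝ) ^ 2) ^ s * ‖a k‖ ^ 2 := hsum.tsum_le_tsum hsq ha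
    _ ≤ _ := le_mul_of_one_le_left (by positivity) (by linarith [Real.pi_gt_three])

lemma exists_tsum_enorm_le_hnorm {s : ℝ} (hs : 1 / 2 < s) :
    ∃ C : ℝ, 0 < C ∧ ∀ a : FSeq, InHs s a →
      ∑' k, ‖a k‖ₑ ≤ ENNReal.ofReal (C * hnorm s a) := by
  have hsum : Summable fun k : ℤ => ‖besselSymbol (-s) k‖ ^ 2 := by
    simpa only [Real.norm_eq_abs, sq_abs] using summable_besselSymbol_neg_sq hs
  refine ⟨√(∑' k : ℤ, ‖besselSymbol (-s) k‖ ^ 2), ?_, fun a ha => ?_⟩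
  · have h0 : 0 < ‖besselSymbol (-s) 0‖ := norm_pos_iff.mpr (besselSymbol_pos (-s) 0).ne'
    exact Real.sqrt_pos.mpr (hsum.tsum_pos (fun _ => by positivity) 0 (by positivity))
  calc
    ∑' k, ‖a k‖ₑ = ∑' k, ‖besselSymbol (-s) k‖ₑ * ‖besselSymbol s k • a k‖ₑ := by
      refine tsum_congr fun k => ?_
      rw [← enorm_smul, besselSymbol_neg, inv_smul_smul₀ (besselSymbol_pos s k).ne']
    _ ≤ eLpNorm (besselSymbol (-s)) 2 count * eLpNorm (fun k => besselSymbol s k • a k) 2 count :=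
      tsum_enorm_mul_enorm_le_eLpNorm_mul_eLpNorm 2 2 _ _
    _ ≤ _ := by
      rw [ENNReal.ofReal_mul (by positivity), ← eLpNorm_two_count_eq_ofReal hsum]
      gcongr
      refine eLpNorm_two_le_hnorm ha fun k => ?_
      rw [norm_smul, Real.norm_of_nonneg (besselSymbol_pos s k).le]

lemma eLpNorm_intCast_smul_le_hnorm_one {a : FSeq} (ha : InHs 1 a) :
    eLpNorm (fun k : ℤ => (k : ℝ) • a k) 2 count ≤ ENNReal.ofReal (hnorm 1 a) := by
  refine eLpNorm_two_le_hnorm ha fun k => ?_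
  rw [norm_smul]
  gcongr
  exact abs_le_besselSymbol_one k

lemma eLpNorm_le_hnorm_zero {a : FSeq} (ha : InHs 0 a) :
    eLpNorm a 2 count ≤ ENNReal.ofReal (hnorm 0 a) :=
  eLpNorm_two_le_hnorm ha fun k => by simp [besselSymbol]

lemma tsum_enorm_cubic_pairing_le (u v w f : FSeq) :
    ∑' x : ℤ × ℤ × ℤ,
      ‖|(x.2.1 : ℝ)| * ‖u x.2.1‖ * ‖v x.2.2‖ * ‖w (x.1 - x.2.1 - x.2.2)‖ * ‖f x.1‖‖ₑ ≤
      (∑' m, ‖v m‖ₑ) * (∑' n, ‖w n‖ₑ) *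
        (eLpNorm (fun k : ℤ => (k : ℝ) • u k) 2 count * eLpNorm f 2 count) := by
  simpa only [enorm_mul, enorm_norm, Real.enorm_abs, enorm_smul] using
    tsum_trilinear_pairing_le 2 2 (fun k : ℤ => (k : ℝ) • u k) (fun m => ‖v m‖ₑ)
      (fun n => ‖w n‖ₑ) f

theorem cubic_pairing_bound_general {s : ℝ} (hs : 1 / 2 < s) :
    ∃ C : ℝ, 0 < C ∧ ∀ u v w f : FSeq, InHs 1 u → InHs s v → InHs s w → InHs 0 f →
      (Summable fun x : ℤ × ℤ × ℤ =>
        |(x.2.1 : ℝ)| * ‖u x.2.1‖ * ‖v x.2.2‖ * ‖w (x.1 - x.2.1 - x.2.2)‖ * ‖f x.1‖) ∧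
      ∑' k : ℤ, (∑' p : ℤ × ℤ,
          |(p.1 : ℝ)| * ‖u p.1‖ * ‖v p.2‖ * ‖w (k - p.1 - p.2)‖) * ‖f k‖
        ≤ C * hnorm 0 f * (hnorm 1 u * hnorm s v * hnorm s w) := by
  obtain ⟨C, hC, hℓ1⟩ := exists_tsum_enorm_le_hnorm hs
  refine ⟨C ^ 2, by positivity, fun u v w f hu hv hw hf => ?_⟩
  have hu0 := hnorm_nonneg 1 u
  have hv0 := hnorm_nonneg s v
  have hw0 := hnorm_nonneg s w
  have hf0 := hnorm_nonneg 0 f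
  have hbound : ∑' x : ℤ × ℤ × ℤ,
      ‖|(x.2.1 : ℝ)| * ‖u x.2.1‖ * ‖v x.2.2‖ * ‖w (x.1 - x.2.1 - x.2.2)‖ * ‖f x.1‖‖ₑ ≤
        ENNReal.ofReal (C ^ 2 * hnorm 0 f * (hnorm 1 u * hnorm s v * hnorm s w)) := by
    calc
      _ ≤ (∑' m, ‖v m‖ₑ) * (∑' n, ‖w n‖ₑ) *
            (eLpNorm (fun k : ℤ => (k : ℝ) • u k) 2 count * eLpNorm f 2 count) :=
        tsum_enorm_cubic_pairing_le u v w f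
      _ ≤ ENNReal.ofReal (C * hnorm s v) * ENNReal.ofReal (C * hnorm s w) *
            (ENNReal.ofReal (hnorm 1 u) * ENNReal.ofReal (hnorm 0 f)) := by
        gcongr
        exacts [hℓ1 v hv, hℓ1 w hw, eLpNorm_intCast_smul_le_hnorm_one hu,
          eLpNorm_le_hnorm_zero hf]
      _ = _ := by
        rw [← ENNReal.ofReal_mul (by positivity), ← ENNReal.ofReal_mul (by positivity),
          ← ENNReal.ofReal_mul (by positivity)]
        congr 1
        ring
  obtain ⟨hsum, hle⟩ :=
    summable_and_tsum_le_of_tsum_enorm_le (fun _ => by positivity) (by positivity) hbound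
  refine ⟨hsum, ?_⟩
  simpa only [hsum.tsum_prod, tsum_mul_right] using hle

theorem cubic_pairing_bound :
    ∃ C : ℝ, 0 < C ∧ ∀ v f : FSeq, InHs 1 v → InHs 0 f →
      ∑' k : ℤ, (∑' p : ℤ × ℤ,
          |(p.1 : ℝ)| * ‖v p.1‖ * ‖v p.2‖ * ‖v (k - p.1 - p.2)‖) * ‖f k‖
        ≤ C * hnorm 0 f * hnorm 1 v ^ 3 := by
  obtain ⟨C, hC, h⟩ := cubic_pairing_bound_general (s := 1) (by norm_num)
  exact ⟨C, hC, fun v f hv hf => by simpa only [pow_three'] using (h v v v f hv hv hv hf).2⟩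

end
end
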